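/- Let 𝓑 ⊂ {1,...,N} and let 𝓔 be the σ-algebra generated by {X_n : n ∈ 𝓑}. Then there is a constant C₂ ≥ 1, depending only on the ellipticity constant C, such that for every n ∉ 𝓑 and almost every sample point: C₂^{-1} Var(Y_n) ≤ Var(Y_n | 𝓔) ≤ C₂ Var(Y_n). -/

import Mathlib

open MeasureTheory ProbabilityTheory Filter Finset
open scoped ENNReal Topology

noncomputable section

namespace EdgeworthMC

variable {Ω E : Type*} [MeasurableSpace Ω] [MeasurableSpace E]

/-- The standard Gaussian density `𝔤(u) = (2π)^{-1/2} e^{-u²/2}`. -/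
def gaussDensity (u : ℝ) : ℝ := (Real.sqrt (2 * Real.pi))⁻¹ * Real.exp (-u ^ 2 / 2)

/-- `UEChain μ X κ C` : the process `X` is a Markov chain (with respect to the probability
measure `μ`) with transition kernels `κ n` from the state at time `n` to the state at time
`n+1`, and the chain is uniformly elliptic with ellipticity constant `C`:
`C⁻¹ ℙ(X_{n+1} ∈ A) ≤ ℙ(X_{n+1} ∈ A | X_n = x) ≤ C ℙ(X_{n+1} ∈ A)` for a.e. `x`. -/
def UEChain (μ : Measure Ω) (X : ℕ → Ω → E) (κ : ℕ → Kernel E E) (C : ℝ) : Prop :=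
  IsProbabilityMeasure μ ∧
  (∀ n, Measurable (X n)) ∧
  (∀ n, IsMarkovKernel (κ n)) ∧
  (∀ n (A : Set E), MeasurableSet A →
      (μ[fun ω => A.indicator (fun _ => (1 : ℝ)) (X (n + 1) ω) |
          ⨆ i : Fin (n + 1), MeasurableSpace.comap (X i) (inferInstance : MeasurableSpace E)]
        =ᵐ[μ] fun ω => (κ n (X n ω) A).toReal)) ∧
  (∀ n (A : Set E), MeasurableSet A → ∀ᵐ ω ∂μ,
      κ n (X n ω) A ≤ ENNReal.ofReal C * Measure.map (X (n + 1)) μ A ∧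
      Measure.map (X (n + 1)) μ A ≤ ENNReal.ofReal C * κ n (X n ω) A)

/-- Partial sums `S_N = ∑_{n=1}^N f_n(X_n)`. -/
def S (X : ℕ → Ω → E) (f : ℕ → E → ℤ) (N : ℕ) (ω : Ω) : ℤ :=
  ∑ n ∈ Finset.Icc 1 N, f n (X n ω)

/-- `V_N = Var(S_N)`. -/
def VN (μ : Measure Ω) (X : ℕ → Ω → E) (f : ℕ → E → ℤ) (N : ℕ) : ℝ :=
  variance (fun ω => ((S X f N ω : ℝ))) μ

/-- `σ_N = √V_N`. -/
def sigN (μ : Measure Ω) (X : ℕ → Ω → E) (f : ℕ → E → ℤ) (N : ℕ) : ℝ :=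
  Real.sqrt (VN μ X f N)

/-- `a_N = 𝔼(S_N)`. -/
def meanS (μ : Measure Ω) (X : ℕ → Ω → E) (f : ℕ → E → ℤ) (N : ℕ) : ℝ :=
  ∫ ω, ((S X f N ω : ℝ)) ∂μ

/-- The second largest value among the (finitely many) values of `p`, counted with
multiplicity: it equals `min_j max_{j' ≠ j} p j'`. -/
def secondLargest {ι : Type*} (p : ι → ℝ) : ℝ := ⨅ j, sSup (p '' {j}ᶜ)

/-- `q_n(m)` : the second largest value among `ℙ(Y_n ≡ j mod m)`, `j = 0,…,m-1`. -/
def qres (μ : Measure Ω) (X : ℕ → Ω → E) (f : ℕ → E → ℤ) (n m : ℕ) : ℝ :=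
  secondLargest (fun j : ZMod m => (μ {ω | ((f n (X n ω) : ZMod m)) = j}).toReal)

/-- `M_N = min_{2 ≤ m ≤ 2K} ∑_{n=1}^N q_n(m)`. -/
def MN (μ : Measure Ω) (X : ℕ → Ω → E) (f : ℕ → E → ℤ) (K N : ℕ) : ℝ :=
  sInf ((fun m => ∑ n ∈ Finset.Icc 1 N, qres μ X f n m) '' (Set.Icc 2 (2 * K)))

/-- `S_N` obeys the Edgeworth expansion of order `r` : there are polynomials `P_{b,N}`,
with coefficients uniformly bounded in `N` and degrees not depending on `N`, such that
uniformly in `k ∈ ℤ`,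
`ℙ(S_N = k) = ∑_{b=1}^r σ_N^{-b} P_{b,N}(k_N) 𝔤(k_N) + o(σ_N^{-r})`
where `k_N = (k - 𝔼 S_N)/σ_N`. -/
def Edgeworth (μ : Measure Ω) (X : ℕ → Ω → E) (f : ℕ → E → ℤ) (r : ℕ) : Prop :=
  ∃ (D : ℕ) (Cb : ℝ) (P : ℕ → ℕ → Polynomial ℝ),
    (∀ b N, (P b N).natDegree ≤ D) ∧
    (∀ b N i, |(P b N).coeff i| ≤ Cb) ∧
    ∀ ε > 0, ∃ N₀, ∀ N ≥ N₀, ∀ k : ℤ,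
      |(μ {ω | S X f N ω = k}).toReal -
          ∑ b ∈ Finset.Icc 1 r, (sigN μ X f N)⁻¹ ^ b *
            (P b N).eval (((k : ℝ) - meanS μ X f N) / sigN μ X f N) *
            gaussDensity (((k : ℝ) - meanS μ X f N) / sigN μ X f N)|
        ≤ ε * (sigN μ X f N)⁻¹ ^ r

/-- The σ-algebra generated by `X_{j 1}, …, X_{j ℓ}`. -/
def sigmaOf (X : ℕ → Ω → E) {ℓ : ℕ} (j : Fin ℓ → ℕ) : MeasurableSpace Ω :=
  ⨆ i : Fin ℓ, MeasurableSpace.comap (X (j i)) (inferInstance : MeasurableSpace E)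

/-- Conditional probability of the event `s` given the σ-algebra `m`. -/
def condProb (μ : Measure Ω) (m : MeasurableSpace Ω) (s : Set Ω) : Ω → ℝ :=
  μ[s.indicator (fun _ => (1 : ℝ)) | m]

/-- `S_N` obeys the Edgeworth expansion of order `r` in a conditionally stable way:
for every `ℓ`, the order `r` Edgeworth expansion holds for the conditional law of `S_N`
given `X_{j_1},…,X_{j_ℓ}`, with error term `o_ℓ(σ_N^{-r})` and polynomial coefficient
bounds depending only on `ℓ` (and `r`), uniformly over all choices of indices
`1 ≤ j_1,…,j_ℓ ≤ N`. -/
def CondStableEdgeworth (μ : Measure Ω) (X : ℕ → Ω → E) (f : ℕ → E → ℤ) (r : ℕ) : Prop :=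
  ∀ ℓ : ℕ, ∃ (D : ℕ) (Cb : ℝ), ∀ ε > 0, ∃ N₀, ∀ N ≥ N₀,
    ∀ j : Fin ℓ → ℕ, (∀ i, j i ∈ Finset.Icc 1 N) →
      ∃ P : ℕ → Ω → Polynomial ℝ,
        (∀ b ω, (P b ω).natDegree ≤ D) ∧
        (∀ b ω i, |(P b ω).coeff i| ≤ Cb) ∧
        ∀ᵐ ω ∂μ, ∀ k : ℤ,
          |condProb μ (sigmaOf X j) {ω' | S X f N ω' = k} ω -
              ∑ b ∈ Finset.Icc 1 r, (sigN μ X f N)⁻¹ ^ b *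
                (P b ω).eval (((k : ℝ) -
                    (μ[fun ω' => ((S X f N ω' : ℝ)) | sigmaOf X j]) ω) / sigN μ X f N) *
                gaussDensity (((k : ℝ) -
                    (μ[fun ω' => ((S X f N ω' : ℝ)) | sigmaOf X j]) ω) / sigN μ X f N)|
            ≤ ε * (sigN μ X f N)⁻¹ ^ r

/-- `t` is a resonant point: `t = 2πl/m` with `0 < m ≤ 2K`, `0 ≤ l < m`. -/
def IsResonant (K : ℕ) (t : ℝ) : Prop :=
  ∃ l m : ℕ, 0 < m ∧ m ≤ 2 * K ∧ l < m ∧ t = 2 * Real.pi * l / m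

/-- The conditional characteristic function `𝔼[e^{itS_N} | X_{j_1},…,X_{j_ℓ}]`. -/
def condChar (μ : Measure Ω) (X : ℕ → Ω → E) (f : ℕ → E → ℤ) (t : ℝ) (N : ℕ)
    {ℓ : ℕ} (j : Fin ℓ → ℕ) : Ω → ℂ :=
  μ[fun ω => Complex.exp (Complex.I * (t : ℂ) * ((S X f N ω : ℤ) : ℂ)) | sigmaOf X j]

end EdgeworthMC

namespace EdgeworthMC

variable {Ω E : Type*} [MeasurableSpace Ω] [MeasurableSpace E]

/-- The σ-algebra `𝓔` generated by `{X_n : n ∈ 𝓑}`. -/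
def sigmaFinset (X : ℕ → Ω → E) (𝓑 : Finset ℕ) : MeasurableSpace Ω :=
  ⨆ n ∈ 𝓑, MeasurableSpace.comap (X n) (inferInstance : MeasurableSpace E)

/-- The conditional variance `Var(g | m) = 𝔼[g² | m] - (𝔼[g | m])²`. -/
def condVar (μ : Measure Ω) (m : MeasurableSpace Ω) (g : Ω → ℝ) : Ω → ℝ :=
  fun ω => (μ[fun ω' => (g ω') ^ 2 | m]) ω - ((μ[g | m]) ω) ^ 2

end EdgeworthMC

namespace EdgeworthMC

variable {Ω E : Type*} {mΩ : MeasurableSpace Ω} [MeasurableSpace E]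

/-- The sets `a ∩ b` with `a` measurable for `m₁` and `b` measurable for `m₂`. -/
def interSets {α : Type*} (m₁ m₂ : MeasurableSpace α) : Set (Set α) :=
  {s | ∃ a b, MeasurableSet[m₁] a ∧ MeasurableSet[m₂] b ∧ a ∩ b = s}

lemma isSetSemiring_interSets {α : Type*} (m₁ m₂ : MeasurableSpace α) :
    IsSetSemiring (interSets m₁ m₂) where
  empty_mem := ⟨∅, ∅, @MeasurableSet.empty _ m₁, @MeasurableSet.empty _ m₂, by simp⟩
  inter_mem := by
    rintro _ ⟨a, b, ha, hb, rfl⟩ _ ⟨a', b', ha', hb', rfl⟩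
    exact ⟨a ∩ a', b ∩ b', ha.inter ha', hb.inter hb', Set.inter_inter_inter_comm _ _ _ _⟩
  sdiff_eq_sUnion' := by
    classical
    rintro _ ⟨a, b, ha, hb, rfl⟩ _ ⟨a', b', ha', hb', rfl⟩
    refine ⟨{(a \ a') ∩ b, (a ∩ a') ∩ (b \ b')}, ?_, ?_, ?_⟩
    · intro s hs
      simp only [Finset.coe_insert, Finset.coe_singleton, Set.mem_insert_iff,
        Set.mem_singleton_iff] at hs
      rcases hs with rfl | rfl
      · exact ⟨_, _, ha.diff ha', hb, rfl⟩
      · exact ⟨_, _, ha.inter ha', hb.diff hb', rfl⟩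
    · rw [Finset.coe_insert, Finset.coe_singleton]
      exact Set.pairwise_pair_of_symm.2 fun _ ↦ Set.disjoint_left.2 fun x hx hx' ↦ hx.1.2 hx'.1.2
    · ext x
      simp only [Set.mem_sdiff, Set.mem_inter_iff, Finset.coe_insert, Finset.coe_singleton,
        Set.sUnion_insert, Set.sUnion_singleton, Set.mem_union]
      tauto

lemma generateFrom_interSets {α : Type*} (m₁ m₂ : MeasurableSpace α) :
    MeasurableSpace.generateFrom (interSets m₁ m₂) = m₁ ⊔ m₂ := by
  refine le_antisymm (MeasurableSpace.generateFrom_le ?_) (sup_le ?_ ?_)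
  · rintro _ ⟨a, b, ha, hb, rfl⟩
    exact MeasurableSet.inter (le_sup_left (b := m₂) a ha) (le_sup_right (a := m₁) b hb)
  · exact fun a ha ↦ MeasurableSpace.measurableSet_generateFrom
      ⟨a, Set.univ, ha, MeasurableSet.univ, Set.inter_univ a⟩
  · exact fun b hb ↦ MeasurableSpace.measurableSet_generateFrom
      ⟨Set.univ, b, MeasurableSet.univ, hb, Set.univ_inter b⟩

/-- A finite measure dominated by another one on a generating semiring of sets containing the
whole space is dominated by it on every measurable set. -/
lemma measure_le_of_le_on_isSetSemiring {α : Type*} [mα : MeasurableSpace α]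
    {μ ν : Measure α} [IsFiniteMeasure μ] [IsFiniteMeasure ν] {R : Set (Set α)}
    (hR : IsSetSemiring R) (huniv : Set.univ ∈ R) (hgen : mα = MeasurableSpace.generateFrom R)
    (hle : ∀ s ∈ R, ν s ≤ μ s) : ν ≤ μ := by
  have hmeas : ∀ s ∈ R, MeasurableSet s := fun s hs ↦ by
    rw [hgen]; exact MeasurableSpace.measurableSet_generateFrom hs
  refine Measure.le_iff.2 fun s hs ↦ ENNReal.le_of_forall_pos_le_add fun ε hε _ ↦ ?_
  have hε2 : (0 : ℝ≥0∞) < ε / 2 := by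
    rw [ENNReal.div_pos_iff]; exact ⟨by simpa using hε.ne', by simp⟩
  obtain ⟨t, ht, hts⟩ := exists_measure_symmDiff_lt_of_generateFrom_isSetSemiring (μ := μ + ν)
    hR ⟨{Set.univ}, by simp, by simpa using huniv, by simp⟩ hgen hs hε2
  have hνμ : ν t ≤ μ t := by
    obtain ⟨P, hP⟩ := hR.mem_supClosure_iff.1 ht
    rw [← P.sup_parts, Finset.sup_set_eq_biUnion,
      measure_biUnion_finset P.disjoint (fun b hb ↦ hmeas _ (hP hb)),
      measure_biUnion_finset P.disjoint (fun b hb ↦ hmeas _ (hP hb))]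
    exact Finset.sum_le_sum fun b hb ↦ hle _ (hP hb)
  have hν : ν (s \ t) ≤ ε / 2 :=
    calc ν (s \ t) ≤ (μ + ν) (s \ t) := by simp
      _ ≤ (μ + ν) (symmDiff t s) :=
          measure_mono (by rw [Set.symmDiff_def]; exact Set.subset_union_right)
      _ ≤ ε / 2 := hts.le
  have hμ : μ (t \ s) ≤ ε / 2 :=
    calc μ (t \ s) ≤ (μ + ν) (t \ s) := by simp
      _ ≤ (μ + ν) (symmDiff t s) :=
          measure_mono (by rw [Set.symmDiff_def]; exact Set.subset_union_left)
      _ ≤ ε / 2 := hts.le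
  calc ν s ≤ ν (t ∪ s \ t) :=
        measure_mono (by rw [Set.union_sdiff_self]; exact Set.subset_union_right)
    _ ≤ ν t + ν (s \ t) := measure_union_le _ _
    _ ≤ μ (s ∪ t \ s) + ε / 2 := by
        refine add_le_add (hνμ.trans (measure_mono ?_)) hν
        rw [Set.union_sdiff_self]
        exact Set.subset_union_right
    _ ≤ μ s + ε / 2 + ε / 2 := by
        gcongr
        exact (measure_union_le _ _).trans (by gcongr)
    _ = μ s + ε := by rw [add_assoc, ENNReal.add_halves]

/-- A finite measure dominated by another one on the intersections of a set of `m₁` and a set of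
`m₂` is dominated by it on the σ-algebra generated by `m₁` and `m₂`. -/
lemma measure_le_of_le_on_interSets {m₁ m₂ mΩ : MeasurableSpace Ω} {μ ν : Measure Ω}
    [IsFiniteMeasure μ] [IsFiniteMeasure ν]
    (h₁ : m₁ ≤ mΩ) (h₂ : m₂ ≤ mΩ)
    (hle : ∀ a b, MeasurableSet[m₁] a → MeasurableSet[m₂] b → ν (a ∩ b) ≤ μ (a ∩ b))
    {s : Set Ω} (hs : MeasurableSet[m₁ ⊔ m₂] s) : ν s ≤ μ s := by
  have h := sup_le h₁ h₂
  have key : ν.trim h ≤ μ.trim h := by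
    refine @measure_le_of_le_on_isSetSemiring _ (m₁ ⊔ m₂) _ _ _ _ _
      (isSetSemiring_interSets m₁ m₂)
      ⟨Set.univ, Set.univ, MeasurableSet.univ, MeasurableSet.univ, by simp⟩
      (generateFrom_interSets m₁ m₂).symm ?_
    rintro _ ⟨a, b, ha, hb, rfl⟩
    have hab : MeasurableSet[m₁ ⊔ m₂] (a ∩ b) :=
      MeasurableSet.inter (le_sup_left (b := m₂) a ha) (le_sup_right (a := m₁) b hb)
    rw [trim_measurableSet_eq h hab, trim_measurableSet_eq h hab]
    exact hle a b ha hb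
  have := Measure.le_iff.1 key s hs
  rwa [trim_measurableSet_eq h hs, trim_measurableSet_eq h hs] at this

/-- The σ-algebra generated by `X_0, …, X_{n-1}`. -/
@[reducible] def past (X : ℕ → Ω → E) (n : ℕ) : MeasurableSpace Ω :=
  ⨆ i : Fin n, MeasurableSpace.comap (X i) (inferInstance : MeasurableSpace E)

/-- The σ-algebra generated by `X_m, …, X_{m+k}`. -/
@[reducible] def future (X : ℕ → Ω → E) : ℕ → ℕ → MeasurableSpace Ω
  | m, 0 => MeasurableSpace.comap (X m) (inferInstance : MeasurableSpace E)
  | m, k + 1 => MeasurableSpace.comap (X m) (inferInstance : MeasurableSpace E) ⊔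
      future X (m + 1) k

lemma comap_le_past (X : ℕ → Ω → E) {i n : ℕ} (h : i < n) :
    MeasurableSpace.comap (X i) (inferInstance : MeasurableSpace E) ≤ past X n :=
  le_iSup (fun i : Fin n ↦ MeasurableSpace.comap (X i) (inferInstance : MeasurableSpace E)) ⟨i, h⟩

lemma past_mono (X : ℕ → Ω → E) {n m : ℕ} (h : n ≤ m) : past X n ≤ past X m :=
  iSup_le fun i ↦ comap_le_past X (i.2.trans_le h)

lemma past_le {X : ℕ → Ω → E} (hX : ∀ n, Measurable (X n)) (n : ℕ) :
    past X n ≤ mΩ :=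
  iSup_le fun i ↦ (hX i).comap_le

lemma future_le {X : ℕ → Ω → E} (hX : ∀ n, Measurable (X n)) (m k : ℕ) :
    future X m k ≤ mΩ := by
  induction k generalizing m with
  | zero => exact (hX m).comap_le
  | succ k ih => exact sup_le (hX m).comap_le (ih (m + 1))

lemma comap_le_future (X : ℕ → Ω → E) {i m k : ℕ} (hmi : m ≤ i) (hik : i ≤ m + k) :
    MeasurableSpace.comap (X i) (inferInstance : MeasurableSpace E) ≤ future X m k := by
  induction k generalizing m with
  | zero =>
    obtain rfl : i = m := by omega
    exact le_rfl
  | succ k ih =>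
    rcases hmi.eq_or_lt with rfl | h
    · exact le_sup_left
    · exact (ih (m := m + 1) h (by omega)).trans le_sup_right

lemma sigmaFinset_le (X : ℕ → Ω → E) {𝓑 : Finset ℕ} {N n : ℕ} (h𝓑 : 𝓑 ⊆ Finset.Icc 1 N)
    (hn : n ∉ 𝓑) : sigmaFinset X 𝓑 ≤ past X n ⊔ future X (n + 1) N := by
  refine iSup₂_le fun i hi ↦ ?_
  have hiN := (Finset.mem_Icc.1 (h𝓑 hi)).2
  rcases lt_trichotomy i n with h | rfl | h
  · exact (comap_le_past X h).trans le_sup_left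
  · exact absurd hi hn
  · exact (comap_le_future X h (by omega)).trans le_sup_right

section Chain

variable {μ : Measure Ω} {X : ℕ → Ω → E} {κ : ℕ → Kernel E E} {C : ℝ}

/-- The Markov property: the law of `X_{n+1}` on an event depending on `X_0, …, X_n`. -/
lemma UEChain.map_restrict (h : UEChain μ X κ C) (n : ℕ) {G : Set Ω}
    (hG : MeasurableSet[past X (n + 1)] G) {A : Set E} (hA : MeasurableSet A) :
    μ (G ∩ X (n + 1) ⁻¹' A) = ∫⁻ ω in G, κ n (X n ω) A ∂μ := by
  obtain ⟨hμ, hX, hκ, hM, -⟩ := h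
  have hm := past_le hX (n + 1)
  have hG' : MeasurableSet G := hm G hG
  have hA' : MeasurableSet (X (n + 1) ⁻¹' A) := hX (n + 1) hA
  have hint : Integrable (fun ω ↦ A.indicator (fun _ ↦ (1 : ℝ)) (X (n + 1) ω)) μ :=
    (integrable_const (1 : ℝ)).indicator hA'
  have h1 : ∫ ω in G, (κ n (X n ω) A).toReal ∂μ = μ.real (G ∩ X (n + 1) ⁻¹' A) := by
    rw [← setIntegral_congr_ae hG' ((hM n A hA).mono fun ω hω _ ↦ hω)]
    refine (setIntegral_condExp hm hint hG).trans ?_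
    change ∫ ω in G, (X (n + 1) ⁻¹' A).indicator (fun _ ↦ (1 : ℝ)) ω ∂μ = _
    rw [setIntegral_indicator hA']
    simp
  have hmeas : Measurable fun ω ↦ κ n (X n ω) A := (Kernel.measurable_coe _ hA).comp (hX n)
  rw [integral_toReal hmeas.aemeasurable (ae_of_all _ fun ω ↦ measure_lt_top _ _)] at h1
  refine ((ENNReal.toReal_eq_toReal_iff' ?_ (measure_ne_top _ _)).1 h1).symm
  refine ((setLIntegral_mono' hG' fun ω _ ↦ prob_le_one).trans_lt ?_).ne
  simp

lemma UEChain.setLIntegral_comp_succ (h : UEChain μ X κ C) (n : ℕ) {G : Set Ω}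
    (hG : MeasurableSet[past X (n + 1)] G) {g : E → ℝ≥0∞} (hg : Measurable g) :
    ∫⁻ ω in G, g (X (n + 1) ω) ∂μ = ∫⁻ ω in G, ∫⁻ y, g y ∂(κ n (X n ω)) ∂μ := by
  have hX := h.2.1
  have hG' : MeasurableSet G := past_le hX (n + 1) G hG
  have hmeas : (μ.restrict G).map (X (n + 1)) = ((μ.restrict G).map (X n)).bind (κ n) := by
    ext A hA
    rw [Measure.map_apply (hX _) hA, Measure.restrict_apply (hX _ hA), Set.inter_comm,
      h.map_restrict n hG hA, Measure.bind_apply hA (κ n).measurable.aemeasurable,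
      lintegral_map (Kernel.measurable_coe _ hA) (hX n)]
  rw [← lintegral_map hg (hX _), hmeas, Measure.lintegral_bind (κ n).measurable.aemeasurable
    hg.aemeasurable, lintegral_map hg.lintegral_kernel (hX n)]

/-- Conditionally on `X_0, …, X_m`, the probability of an event depending on `X_m, …, X_{m+k}` is
a function of `X_m`. -/
lemma UEChain.exists_measure_inter_eq (h : UEChain μ X κ C) (k m : ℕ) {F : Set Ω}
    (hF : MeasurableSet[future X m k] F) :
    ∃ g : E → ℝ≥0∞, Measurable g ∧ ∀ G, MeasurableSet[past X (m + 1)] G →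
      μ (G ∩ F) = ∫⁻ ω in G, g (X m ω) ∂μ := by
  have hμ := h.1
  have hX := h.2.1
  have indic : ∀ (m : ℕ) {A : Set E} (g : E → ℝ≥0∞) (G : Set Ω), MeasurableSet A →
      ∫⁻ ω in G ∩ X m ⁻¹' A, g (X m ω) ∂μ = ∫⁻ ω in G, A.indicator g (X m ω) ∂μ := by
    intro m A g G hA
    change _ = ∫⁻ ω in G, (X m ⁻¹' A).indicator (fun ω ↦ g (X m ω)) ω ∂μ
    rw [setLIntegral_indicator (hX m hA), Set.inter_comm]
  induction k generalizing m F with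
  | zero =>
    obtain ⟨A, hA, rfl⟩ := hF
    refine ⟨A.indicator 1, measurable_one.indicator hA, fun G _ ↦ ?_⟩
    rw [← indic m 1 G hA]
    simp
  | succ k ih =>
    have hfut := future_le hX m (k + 1)
    refine MeasurableSpace.induction_on_inter (m := future X m (k + 1))
      (C := fun F _ ↦ ∃ g : E → ℝ≥0∞, Measurable g ∧ ∀ G, MeasurableSet[past X (m + 1)] G →
        μ (G ∩ F) = ∫⁻ ω in G, g (X m ω) ∂μ) (generateFrom_interSets _ _).symm
      (isSetSemiring_interSets _ _).isPiSystem ?_ ?_ ?_ ?_ F hF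
    · exact ⟨0, measurable_zero, by simp⟩
    · rintro _ ⟨_, F', ⟨A, hA, rfl⟩, hF', rfl⟩
      obtain ⟨g, hg, hgF⟩ := ih (m + 1) hF'
      refine ⟨A.indicator fun x ↦ ∫⁻ y, g y ∂(κ m x), hg.lintegral_kernel.indicator hA,
        fun G hG ↦ ?_⟩
      have hGA : MeasurableSet[past X (m + 1)] (G ∩ X m ⁻¹' A) :=
        hG.inter (comap_le_past X m.lt_succ_self _ ⟨A, hA, rfl⟩)
      rw [← Set.inter_assoc, hgF _ (past_mono X (by omega) _ hGA),
        h.setLIntegral_comp_succ m hGA hg, ← indic m _ G hA]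
    · rintro F hF ⟨g, hg, hgF⟩
      have hle : ∀ᵐ ω ∂μ, g (X m ω) ≤ 1 := by
        refine ae_of_ae_map (hX m).aemeasurable
          (ae_le_of_forall_setLIntegral_le_of_sigmaFinite (g := fun _ ↦ 1) hg fun B hB _ ↦ ?_)
        rw [setLIntegral_map hB hg (hX m), ← hgF _ (comap_le_past X m.lt_succ_self _ ⟨B, hB, rfl⟩)]
        rw [setLIntegral_one, Measure.map_apply (hX m) hB]
        exact measure_mono Set.inter_subset_left
      refine ⟨fun x ↦ 1 - g x, measurable_const.sub hg, fun G hG ↦ ?_⟩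
      have hgX : Measurable fun ω ↦ g (X m ω) := hg.comp (hX m)
      beta_reduce
      rw [lintegral_sub hgX (by rw [← hgF G hG]; exact measure_ne_top _ _)
        (ae_restrict_of_ae hle), ← hgF G hG, setLIntegral_one, ← Set.sdiff_eq,
        ← measure_sdiff_add_inter G (hfut F hF), ENNReal.add_sub_cancel_right (measure_ne_top _ _)]
    · intro F hd hF hg
      choose g hg hgF using hg
      refine ⟨fun x ↦ ∑' i, g i x, Measurable.tsum hg, fun G hG ↦ ?_⟩
      have hgX : ∀ i, Measurable fun ω ↦ g i (X m ω) := fun i ↦ (hg i).comp (hX m)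
      beta_reduce
      rw [lintegral_tsum fun i ↦ (hgX i).aemeasurable, Set.inter_iUnion,
        measure_iUnion (fun i j hij ↦ (hd hij).mono Set.inter_subset_right Set.inter_subset_right)
          fun i ↦ (past_le hX _ G hG).inter (hfut _ (hF i))]
      exact tsum_congr fun i ↦ hgF i G hG

/-- Uniform ellipticity makes the past and the future comparable to independent ones. -/
lemma UEChain.measure_inter_comparable (h : UEChain μ X κ C) {n k : ℕ} {G F : Set Ω}
    (hG : MeasurableSet[past X (n + 1)] G) (hF : MeasurableSet[future X (n + 1) k] F) :
    μ (G ∩ F) ≤ ENNReal.ofReal C * (μ G * μ F) ∧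
      μ G * μ F ≤ ENNReal.ofReal C * μ (G ∩ F) := by
  have hμ := h.1
  have hX := h.2.1
  have hG' : MeasurableSet G := past_le hX (n + 1) G hG
  obtain ⟨g, hg, hgF⟩ := h.exists_measure_inter_eq k (n + 1) hF
  have hGF := hgF G (past_mono X (by omega) G hG)
  have hFF := hgF Set.univ MeasurableSet.univ
  rw [Set.univ_inter, Measure.restrict_univ] at hFF
  have hmap : ∀ A, MeasurableSet A →
      (μ.restrict G).map (X (n + 1)) A = ∫⁻ ω in G, κ n (X n ω) A ∂μ := fun A hA ↦ by
    rw [Measure.map_apply (hX _) hA, Measure.restrict_apply (hX _ hA), Set.inter_comm,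
      h.map_restrict n hG hA]
  rw [hGF, hFF, ← lintegral_map hg (hX _), ← lintegral_map hg (hX _)]
  constructor
  · rw [← mul_assoc, ← smul_eq_mul, ← lintegral_smul_measure]
    refine lintegral_mono' (Measure.le_iff.2 fun A hA ↦ ?_) le_rfl
    rw [hmap A hA, Measure.smul_apply, smul_eq_mul, mul_right_comm, ← setLIntegral_const]
    exact lintegral_mono_ae (ae_restrict_of_ae ((h.2.2.2.2 n A hA).mono fun ω hω ↦ hω.1))
  · rw [← smul_eq_mul, ← smul_eq_mul (ENNReal.ofReal C), ← lintegral_smul_measure,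
      ← lintegral_smul_measure]
    refine lintegral_mono' (Measure.le_iff.2 fun A hA ↦ ?_) le_rfl
    have hmeas : Measurable fun ω ↦ κ n (X n ω) A := (Kernel.measurable_coe _ hA).comp (hX n)
    rw [Measure.smul_apply, Measure.smul_apply, hmap A hA, smul_eq_mul, smul_eq_mul, mul_comm,
      ← setLIntegral_const, ← lintegral_const_mul _ hmeas]
    exact lintegral_mono_ae (ae_restrict_of_ae ((h.2.2.2.2 n A hA).mono fun ω hω ↦ hω.2))

/-- Uniform ellipticity makes an event depending on `X_n` comparable to one independent of the
other times. -/
lemma UEChain.measure_preimage_inter_comparable (h : UEChain μ X κ C) (hC : 1 ≤ C) {n k : ℕ}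
    {A : Set E} (hA : MeasurableSet A) {B : Set Ω}
    (hB : MeasurableSet[past X n ⊔ future X (n + 1) k] B) :
    μ (X n ⁻¹' A ∩ B) ≤ ENNReal.ofReal C ^ 3 * (μ (X n ⁻¹' A) * μ B) ∧
      μ (X n ⁻¹' A) * μ B ≤ ENNReal.ofReal C ^ 3 * μ (X n ⁻¹' A ∩ B) := by
  have hμ := h.1
  have hX := h.2.1
  set c := ENNReal.ofReal C
  have hc1 : 1 ≤ c := by simpa [c] using hC
  have hA' : MeasurableSet (X n ⁻¹' A) := hX n hA
  set D := X n ⁻¹' A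
  have past_comp : ∀ P, MeasurableSet[past X n] P →
      μ (P ∩ D) ≤ c * (μ P * μ D) ∧ μ P * μ D ≤ c * μ (P ∩ D) := by
    intro P hP
    cases n with
    | zero =>
      have hbot : past X 0 = ⊥ := iSup_of_empty _
      rw [hbot, MeasurableSpace.measurableSet_bot_iff] at hP
      rcases hP with rfl | rfl
      · simp
      · simpa using le_mul_of_one_le_left (zero_le (a := μ D)) hc1
    | succ j => exact h.measure_inter_comparable (k := 0) hP ⟨A, hA, rfl⟩
  have key : ∀ P F, MeasurableSet[past X n] P → MeasurableSet[future X (n + 1) k] F →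
      μ (P ∩ F ∩ D) ≤ c ^ 3 * μ D * μ (P ∩ F) ∧ μ D * μ (P ∩ F) ≤ c ^ 3 * μ (P ∩ F ∩ D) := by
    intro P F hP hF
    have hP' : MeasurableSet[past X (n + 1)] P := past_mono X n.le_succ P hP
    have hPD : MeasurableSet[past X (n + 1)] (P ∩ D) :=
      hP'.inter (comap_le_past X n.lt_succ_self _ ⟨A, hA, rfl⟩)
    obtain ⟨h1, h1'⟩ := h.measure_inter_comparable hPD hF
    obtain ⟨h2, h2'⟩ := past_comp P hP
    obtain ⟨h3, h3'⟩ := h.measure_inter_comparable hP' hF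
    rw [Set.inter_right_comm]
    constructor
    · calc μ (P ∩ D ∩ F) ≤ c * (c * (μ P * μ D) * μ F) := h1.trans (by gcongr)
        _ = c ^ 2 * μ D * (μ P * μ F) := by ring
        _ ≤ c ^ 2 * μ D * (c * μ (P ∩ F)) := by gcongr
        _ = c ^ 3 * μ D * μ (P ∩ F) := by ring
    · calc μ D * μ (P ∩ F) ≤ μ D * (c * (μ P * μ F)) := by gcongr
        _ = c * (μ P * μ D) * μ F := by ring
        _ ≤ c * (c * μ (P ∩ D)) * μ F := by gcongr
        _ = c ^ 2 * (μ (P ∩ D) * μ F) := by ring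
        _ ≤ c ^ 2 * (c * μ (P ∩ D ∩ F)) := by gcongr
        _ = c ^ 3 * μ (P ∩ D ∩ F) := by ring
  have hc3 : c ^ 3 ≠ ∞ := ENNReal.pow_ne_top ENNReal.ofReal_ne_top
  have hP := past_le hX n
  have hF := future_le hX (n + 1) k
  have hB' : MeasurableSet B := sup_le hP hF B hB
  have : IsFiniteMeasure ((c ^ 3 * μ D) • μ) :=
    Measure.smul_finite μ (ENNReal.mul_ne_top hc3 (measure_ne_top _ _))
  have : IsFiniteMeasure (μ D • μ) := Measure.smul_finite μ (measure_ne_top _ _)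
  have : IsFiniteMeasure (c ^ 3 • μ.restrict D) := Measure.smul_finite _ hc3
  constructor
  · have := measure_le_of_le_on_interSets (μ := (c ^ 3 * μ D) • μ) (ν := μ.restrict D) hP hF
      (fun P F hP' hF' ↦ by
        simpa [Measure.restrict_apply ((hP P hP').inter (hF F hF'))] using (key P F hP' hF').1) hB
    rwa [Measure.restrict_apply hB', Measure.smul_apply, smul_eq_mul, Set.inter_comm,
      mul_assoc] at this
  · have := measure_le_of_le_on_interSets (μ := c ^ 3 • μ.restrict D) (ν := μ D • μ) hP hF
      (fun P F hP' hF' ↦ by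
        simpa [Measure.restrict_apply ((hP P hP').inter (hF F hF'))] using (key P F hP' hF').2) hB
    rwa [Measure.smul_apply, Measure.smul_apply, Measure.restrict_apply hB', smul_eq_mul,
      smul_eq_mul, Set.inter_comm] at this

lemma UEChain.setLIntegral_comparable (h : UEChain μ X κ C) (hC : 1 ≤ C) {n k : ℕ}
    {g : E → ℝ≥0∞} (hg : Measurable g) {B : Set Ω}
    (hB : MeasurableSet[past X n ⊔ future X (n + 1) k] B) :
    ∫⁻ ω in B, g (X n ω) ∂μ ≤ ENNReal.ofReal C ^ 3 * μ B * ∫⁻ ω, g (X n ω) ∂μ ∧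
      μ B * ∫⁻ ω, g (X n ω) ∂μ ≤ ENNReal.ofReal C ^ 3 * ∫⁻ ω in B, g (X n ω) ∂μ := by
  have hX := h.2.1
  simp only [← lintegral_map hg (hX n), ← smul_eq_mul (_ : ℝ≥0∞) (∫⁻ _, _ ∂_)]
  simp only [← lintegral_smul_measure]
  constructor <;> refine lintegral_mono' (Measure.le_iff.2 fun A hA ↦ ?_) le_rfl <;>
    simp only [Measure.smul_apply, Measure.map_apply (hX n) hA, Measure.restrict_apply (hX n hA),
      smul_eq_mul]
  · rw [mul_assoc, mul_comm (μ B)]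
    exact (h.measure_preimage_inter_comparable hC hA hB).1
  · rw [mul_comm (μ B)]
    exact (h.measure_preimage_inter_comparable hC hA hB).2

/-- A conditional expectation is bounded by `c` if the averages over all conditioning events
are. -/
lemma condExp_le_const_of_setIntegral_le {μ : Measure Ω} [IsFiniteMeasure μ]
    {m : MeasurableSpace Ω} (hm : m ≤ mΩ) {f : Ω → ℝ} (hf : Integrable f μ) {c : ℝ}
    (hle : ∀ s, MeasurableSet[m] s → ∫ ω in s, f ω ∂μ ≤ μ.real s * c) :
    ∀ᵐ ω ∂μ, (μ[f|m]) ω ≤ c := by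
  refine ae_le_of_ae_le_trim (hm := hm) (f₂ := fun _ ↦ c) ?_
  refine ae_le_of_forall_setIntegral_le
    (integrable_condExp.trim hm stronglyMeasurable_condExp) (integrable_const c) fun s hs _ ↦ ?_
  rw [← setIntegral_trim hm stronglyMeasurable_condExp hs,
    ← setIntegral_trim hm stronglyMeasurable_const hs, setIntegral_condExp hm hf hs,
    setIntegral_const, smul_eq_mul]
  exact hle s hs

/-- Conditioning on the other times changes the expectation of a nonnegative function of `X_n`
at most by a constant factor. -/
lemma UEChain.condExp_comparable (h : UEChain μ X κ C) (hC : 1 ≤ C) {n k : ℕ}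
    {m : MeasurableSpace Ω} (hm : m ≤ past X n ⊔ future X (n + 1) k) {φ : E → ℝ}
    (hφ : Measurable φ) (hφ0 : ∀ x, 0 ≤ φ x) (hint : Integrable (fun ω ↦ φ (X n ω)) μ) :
    ∀ᵐ ω ∂μ, (C ^ 3)⁻¹ * ∫ ω', φ (X n ω') ∂μ ≤ (μ[fun ω' ↦ φ (X n ω') | m]) ω ∧
      (μ[fun ω' ↦ φ (X n ω') | m]) ω ≤ C ^ 3 * ∫ ω', φ (X n ω') ∂μ := by
  have hμ := h.1
  have hm' : m ≤ mΩ := hm.trans (sup_le (past_le h.2.1 n) (future_le h.2.1 (n + 1) k))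
  have hC0 : 0 ≤ C := by linarith
  have hlint : ∀ s : Set Ω, ∫⁻ ω in s, ENNReal.ofReal (φ (X n ω)) ∂μ =
      ENNReal.ofReal (∫ ω in s, φ (X n ω) ∂μ) := fun s ↦
    (ofReal_integral_eq_lintegral_ofReal hint.restrict (ae_of_all _ fun _ ↦ hφ0 _)).symm
  have hlint' := hlint Set.univ
  simp only [Measure.restrict_univ] at hlint'
  have hI : 0 ≤ ∫ ω, φ (X n ω) ∂μ := integral_nonneg fun _ ↦ hφ0 _
  have hcomp : ∀ s, MeasurableSet[m] s →
      ∫ ω in s, φ (X n ω) ∂μ ≤ C ^ 3 * μ.real s * ∫ ω, φ (X n ω) ∂μ ∧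
      μ.real s * ∫ ω, φ (X n ω) ∂μ ≤ C ^ 3 * ∫ ω in s, φ (X n ω) ∂μ := by
    intro s hs
    have hs0 : 0 ≤ ∫ ω in s, φ (X n ω) ∂μ := integral_nonneg fun _ ↦ hφ0 _
    have := h.setLIntegral_comparable hC hφ.ennreal_ofReal (hm s hs)
    rw [hlint, hlint', ← ofReal_measureReal (measure_ne_top μ s), ← ENNReal.ofReal_pow hC0,
      ← ENNReal.ofReal_mul (by positivity), ← ENNReal.ofReal_mul (by positivity),
      ← ENNReal.ofReal_mul (by positivity), ← ENNReal.ofReal_mul (by positivity),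
      ENNReal.ofReal_le_ofReal_iff (by positivity), ENNReal.ofReal_le_ofReal_iff (by positivity)]
      at this
    exact this
  have hupper := condExp_le_const_of_setIntegral_le hm' hint
    (c := C ^ 3 * ∫ ω', φ (X n ω') ∂μ) fun s hs ↦ by
      rw [← mul_assoc, mul_comm (μ.real s)]; exact (hcomp s hs).1
  have hlower := condExp_le_const_of_setIntegral_le hm' hint.neg
    (c := -((C ^ 3)⁻¹ * ∫ ω', φ (X n ω') ∂μ)) fun s hs ↦ by
      simp only [Pi.neg_apply]
      rw [integral_neg, mul_neg, neg_le_neg_iff, mul_left_comm,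
        inv_mul_le_iff₀ (by positivity)]
      exact (hcomp s hs).2
  filter_upwards [hupper, hlower, condExp_neg (fun ω' ↦ φ (X n ω')) m (μ := μ)]
    with ω hu hl hneg
  rw [hneg, Pi.neg_apply, neg_le_neg_iff] at hl
  exact ⟨hl, hu⟩

end Chain

/-- Lemma 3.8(i). There is `C₂ ≥ 1`, depending only on the ellipticity
constant `C`, such that for every `𝓑 ⊆ {1,…,N}`, `𝓔 = σ(X_n : n ∈ 𝓑)`, every `n ∉ 𝓑` and
a.e. sample point, `C₂⁻¹ Var(Y_n) ≤ Var(Y_n | 𝓔) ≤ C₂ Var(Y_n)`. -/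
theorem conditional_variance_comparable (C : ℝ) (hC : 1 < C) :
    ∃ C₂ : ℝ, 1 ≤ C₂ ∧
      ∀ (Ω E : Type) [MeasurableSpace Ω] [MeasurableSpace E]
        (μ : Measure Ω) (X : ℕ → Ω → E) (κ : ℕ → Kernel E E) (f : ℕ → E → ℤ) (K : ℕ),
        UEChain μ X κ C →
        (∀ n, Measurable (f n)) →
        (∀ n ω, |f n (X n ω)| ≤ (K : ℤ)) →
        ∀ (N : ℕ) (𝓑 : Finset ℕ), 𝓑 ⊆ Finset.Icc 1 N →
          ∀ n, n ∉ 𝓑 →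
            ∀ᵐ ω ∂μ,
              C₂⁻¹ * variance (fun ω' => ((f n (X n ω') : ℝ))) μ ≤
                  condVar μ (sigmaFinset X 𝓑) (fun ω' => ((f n (X n ω') : ℝ))) ω ∧
                condVar μ (sigmaFinset X 𝓑) (fun ω' => ((f n (X n ω') : ℝ))) ω ≤
                  C₂ * variance (fun ω' => ((f n (X n ω') : ℝ))) μ := by

  refine ⟨C ^ 3, one_le_pow₀ hC.le, ?_⟩
  intro Ω E _ _ μ X κ f K h hf hK N 𝓑 h𝓑 n hn
  have hμ := h.1
  have hX := h.2.1
  have hle := sigmaFinset_le X h𝓑 hn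
  have hle' := hle.trans (sup_le (past_le hX n) (future_le hX (n + 1) N))
  set Y : Ω → ℝ := fun ω ↦ (f n (X n ω) : ℝ) with hY
  have hfm : Measurable fun x ↦ (f n x : ℝ) := measurable_from_top.comp (hf n)
  have hYm : Measurable Y := hfm.comp (hX n)
  have hYL : MemLp Y 2 μ := MemLp.of_bound hYm.aestronglyMeasurable K
    (ae_of_all _ fun ω ↦ by rw [Real.norm_eq_abs]; simp only [hY]; exact_mod_cast hK n ω)
  have hYi : Integrable Y μ := hYL.integrable one_le_two
  have hY2 : Integrable (fun ω ↦ Y ω ^ 2) μ := hYL.integrable_sq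
  have hexpand : ∀ a : ℝ, (fun ω ↦ (Y ω - a) ^ 2) =
      (fun ω ↦ Y ω ^ 2) + ((-2 * a) • Y + fun _ ↦ a ^ 2) := fun a ↦ by
    ext ω; simp only [Pi.add_apply, Pi.smul_apply, smul_eq_mul]; ring
  have hcond : ∀ a : ℝ, ∀ᵐ ω ∂μ, (μ[fun ω' ↦ (Y ω' - a) ^ 2 | sigmaFinset X 𝓑]) ω =
      (μ[fun ω' ↦ Y ω' ^ 2 | sigmaFinset X 𝓑]) ω - 2 * a * (μ[Y | sigmaFinset X 𝓑]) ω + a ^ 2 := by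
    intro a
    rw [hexpand a]
    filter_upwards [condExp_add hY2 ((hYi.smul (-2 * a)).add (integrable_const (a ^ 2))) _,
      condExp_add (hYi.smul (-2 * a)) (integrable_const (a ^ 2)) _,
      condExp_smul (μ := μ) (-2 * a) Y _] with ω h1 h2 h3
    rw [h1, Pi.add_apply, h2, Pi.add_apply, h3, condExp_const hle', Pi.smul_apply, smul_eq_mul]
    ring
  have hvar : ∀ a : ℝ, variance Y μ ≤ ∫ ω, (Y ω - a) ^ 2 ∂μ := fun a ↦ by
    rw [← variance_sub_const hYm.aestronglyMeasurable a]
    exact variance_le_expectation_sq (hYm.sub_const a).aestronglyMeasurable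
  have hcomp : ∀ a : ℝ, ∀ᵐ ω ∂μ,
      (C ^ 3)⁻¹ * ∫ ω', (Y ω' - a) ^ 2 ∂μ ≤
          (μ[fun ω' ↦ Y ω' ^ 2 | sigmaFinset X 𝓑]) ω - 2 * a * (μ[Y | sigmaFinset X 𝓑]) ω + a ^ 2 ∧
        (μ[fun ω' ↦ Y ω' ^ 2 | sigmaFinset X 𝓑]) ω - 2 * a * (μ[Y | sigmaFinset X 𝓑]) ω + a ^ 2 ≤
          C ^ 3 * ∫ ω', (Y ω' - a) ^ 2 ∂μ := fun a ↦ by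
    have hint : Integrable (fun ω ↦ (Y ω - a) ^ 2) μ := (hYL.sub (memLp_const a)).integrable_sq
    filter_upwards [hcond a, h.condExp_comparable hC.le hle (φ := fun x ↦ ((f n x : ℝ) - a) ^ 2)
      ((hfm.sub_const a).pow_const 2) (fun _ ↦ sq_nonneg _) hint] with ω h1 h2
    rw [← h1]
    exact h2
  filter_upwards [hcomp (∫ ω, Y ω ∂μ), ae_all_iff.2 fun q : ℚ ↦ hcomp q] with ω hmean hrat
  have hlow : ∀ a : ℝ, (C ^ 3)⁻¹ * variance Y μ ≤
      (μ[fun ω' ↦ Y ω' ^ 2 | sigmaFinset X 𝓑]) ω - 2 * a * (μ[Y | sigmaFinset X 𝓑]) ω + a ^ 2 := by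
    have hclosed : IsClosed {a : ℝ | (C ^ 3)⁻¹ * variance Y μ ≤
        (μ[fun ω' ↦ Y ω' ^ 2 | sigmaFinset X 𝓑]) ω - 2 * a * (μ[Y | sigmaFinset X 𝓑]) ω + a ^ 2} :=
      isClosed_le (by fun_prop) (by fun_prop)
    intro a
    refine hclosed.closure_subset_iff.2 ?_ (Rat.isDenseEmbedding_coe_real.dense a)
    rintro _ ⟨q, rfl⟩
    refine le_trans ?_ (hrat q).1
    gcongr
    exact hvar q
  rw [variance_eq_integral hYm.aemeasurable] at hlow ⊢
  refine ⟨?_, le_trans ?_ hmean.2⟩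
  · have := hlow ((μ[Y | sigmaFinset X 𝓑]) ω)
    simp only [condVar]
    linarith
  · simp only [condVar]
    linarith [sq_nonneg ((μ[Y | sigmaFinset X 𝓑]) ω - ∫ ω, Y ω ∂μ)]

end EdgeworthMC
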